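/- Let H > 0 and M ∈ ℂ with 2M ≠ H. Then for every z ∈ (0,1): ₂F₁(3/2 − M/H, 3/2 − M/H; 2; z) = −(2H / ((z−1)·z·(H−2M)²)) · [ (H + 2M)·₂F₁(−1/2 − M/H, 1/2 − M/H; 1; z) + (H(z−1) − 2M(z+1))·₂F₁(1/2 − M/H, 1/2 − M/H; 1; z) ]. -/

import Mathlib

/-!
Two of Gauss' contiguous relations carry the argument:
`F(a,b;c) - F(a-1,b;c) = (b/c) x F(a,b+1;c+1)` and
`c F(a,b;c) = a (1-x) F(a+1,b+1;c+1) + (c-a) F(a,b+1;c+1)`.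
Each compares power series coefficients. Eliminating `F(a,b+1;c+1)` gives
`x (1-x) (ab/c) F(a+1,b+1;c+1) = (c-a) F(a-1,b;c) + (a-c+bx) F(a,b;c)`,
and the claim is the case `a = b = 1/2 - M/H`, `c = 1`.
-/

/-- The Gauss hypergeometric function `₂F₁(a,b;c;z) = ∑ (a)ₙ(b)ₙ/((c)ₙ n!) zⁿ`. -/
noncomputable def hyp (a b c z : ℂ) : ℂ :=
  ∑' n : ℕ, ((ascPochhammer ℂ n).eval a * (ascPochhammer ℂ n).eval b /
    ((ascPochhammer ℂ n).eval c * (n.factorial : ℂ))) * z ^ n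

lemma mul_ascPochhammer_eval_add_one {S : Type*} [CommSemiring S] (a : S) (n : ℕ) :
    a * (ascPochhammer S n).eval (a + 1) = (ascPochhammer S (n + 1)).eval a := by
  simp [ascPochhammer_succ_left]

section Coefficient

variable {𝕂 : Type*} [Field 𝕂]

/-- At a zero of the denominator `(c + n) * (n + 1)` both sides are `0`, as `x / 0 = 0`. -/
lemma ordinaryHypergeometricCoefficient_succ (a b c : 𝕂) (n : ℕ) :
    ordinaryHypergeometricCoefficient a b c (n + 1) =
      ordinaryHypergeometricCoefficient a b c n * ((a + n) * (b + n) / ((c + n) * (n + 1))) := by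
  simp only [ordinaryHypergeometricCoefficient, ascPochhammer_succ_eval, Nat.factorial_succ,
    Nat.cast_mul, Nat.cast_succ, mul_inv, div_eq_mul_inv]
  ring

lemma mul_ordinaryHypergeometricCoefficient_add_one_left (a b c : 𝕂) (n : ℕ) :
    a * ordinaryHypergeometricCoefficient (a + 1) b c n =
      (a + n) * ordinaryHypergeometricCoefficient a b c n := by
  have h := (mul_ascPochhammer_eval_add_one a n).trans (ascPochhammer_succ_eval n a)
  simp only [ordinaryHypergeometricCoefficient]
  linear_combination (n.factorial⁻¹ : 𝕂) * (ascPochhammer 𝕂 n).eval b *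
    ((ascPochhammer 𝕂 n).eval c)⁻¹ * h

lemma mul_ordinaryHypergeometricCoefficient_succ [CharZero 𝕂] (a b : 𝕂) {c : 𝕂} (hc : c ≠ 0)
    (n : ℕ) :
    (n + 1) * c * ordinaryHypergeometricCoefficient a b c (n + 1) =
      (a + n) * b * ordinaryHypergeometricCoefficient a (b + 1) (c + 1) n := by
  have hn : (n : 𝕂) + 1 ≠ 0 := n.cast_add_one_ne_zero
  simp only [ordinaryHypergeometricCoefficient, ascPochhammer_succ_eval n a,
    ← mul_ascPochhammer_eval_add_one b, ← mul_ascPochhammer_eval_add_one c, Nat.factorial_succ,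
    Nat.cast_mul, Nat.cast_succ, mul_inv]
  field_simp

variable [CharZero 𝕂] (a b : 𝕂) {c : 𝕂}

lemma ordinaryHypergeometricCoefficient_succ_sub_sub_one_left (hc : c ≠ 0) (n : ℕ) :
    ordinaryHypergeometricCoefficient a b c (n + 1) -
        ordinaryHypergeometricCoefficient (a - 1) b c (n + 1) =
      b / c * ordinaryHypergeometricCoefficient a (b + 1) (c + 1) n := by
  have hn : (n : 𝕂) + 1 ≠ 0 := n.cast_add_one_ne_zero
  have hF := mul_ordinaryHypergeometricCoefficient_succ a b hc n
  have hG := mul_ordinaryHypergeometricCoefficient_succ (a - 1) b hc n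
  have hGF := mul_ordinaryHypergeometricCoefficient_add_one_left (a - 1) (b + 1) (c + 1) n
  rw [sub_add_cancel] at hGF
  field_simp
  apply mul_left_cancel₀ hn
  linear_combination hF - hG + b * hGF

lemma mul_ordinaryHypergeometricCoefficient_succ_eq_add (hc : ∀ k : ℕ, c ≠ -k) (n : ℕ) :
    c * ordinaryHypergeometricCoefficient a b c (n + 1) =
      a * (ordinaryHypergeometricCoefficient (a + 1) (b + 1) (c + 1) (n + 1) -
        ordinaryHypergeometricCoefficient (a + 1) (b + 1) (c + 1) n) +
      (c - a) * ordinaryHypergeometricCoefficient a (b + 1) (c + 1) (n + 1) := by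
  have hn : (n : 𝕂) + 1 ≠ 0 := n.cast_add_one_ne_zero
  have hcn : c + 1 + n ≠ 0 := fun h => hc (n + 1) (by push_cast; linear_combination h)
  have hF := mul_ordinaryHypergeometricCoefficient_succ a b (by simpa using hc 0) n
  have hD : (n + 1) * (c + 1 + n) * ordinaryHypergeometricCoefficient a (b + 1) (c + 1) (n + 1) =
      (a + n) * (b + 1 + n) * ordinaryHypergeometricCoefficient a (b + 1) (c + 1) n := by
    rw [ordinaryHypergeometricCoefficient_succ]
    field_simp
  have hE := mul_ordinaryHypergeometricCoefficient_add_one_left a (b + 1) (c + 1)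
  have hE_succ := hE (n + 1)
  push_cast at hE_succ
  apply mul_left_cancel₀ hn
  linear_combination hF - hD - (n + 1) * hE_succ + (n + 1) * hE n

end Coefficient

lemma eq_mul_of_hasSum_of_succ {R : Type*} [Ring R] [TopologicalSpace R] [IsTopologicalRing R]
    [T2Space R] {f g : ℕ → R} {x s t : R} (hf : HasSum f s) (hg : HasSum g t) (h_zero : f 0 = 0)
    (h_succ : ∀ n, f (n + 1) = x * g n) : s = x * t := by
  have hf_tail : HasSum (fun n => f (n + 1)) s := by
    simpa [h_zero] using (hasSum_nat_add_iff' 1).2 hf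
  exact hf_tail.unique ((hg.mul_left x).congr_fun h_succ)

section RCLike

variable {𝕂 : Type*} [RCLike 𝕂]

lemma one_le_ordinaryHypergeometricSeries_radius (𝔸 : Type*) [NormedDivisionRing 𝔸]
    [NormedAlgebra 𝕂 𝔸] (a b c : 𝕂) : 1 ≤ (ordinaryHypergeometricSeries 𝔸 a b c).radius := by
  by_cases! h : ∃ k : ℕ, (k : 𝕂) = -a ∨ (k : 𝕂) = -b ∨ (k : 𝕂) = -c
  · have h_radius : (ordinaryHypergeometricSeries 𝔸 a b c).radius = ⊤ := by
      obtain ⟨k, ha | hb | hc⟩ := h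
      · exact neg_eq_iff_eq_neg.1 ha.symm ▸ ordinaryHypergeometric_radius_top_of_neg_nat₁ 𝔸 b c
      · exact neg_eq_iff_eq_neg.1 hb.symm ▸ ordinaryHypergeometric_radius_top_of_neg_nat₂ 𝔸 a c
      · exact neg_eq_iff_eq_neg.1 hc.symm ▸ ordinaryHypergeometric_radius_top_of_neg_nat₃ 𝔸 a b
    exact h_radius ▸ le_top
  · exact (ordinaryHypergeometricSeries_radius_eq_one 𝔸 a b c h).ge

variable (a b c : 𝕂) {x : 𝕂}

lemma hasSum_ordinaryHypergeometric (hx : ‖x‖ < 1) :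
    HasSum (fun n => ordinaryHypergeometricCoefficient a b c n * x ^ n) (₂F₁ a b c x) := by
  have hx_mem : x ∈ Metric.eball 0 (ordinaryHypergeometricSeries 𝕂 a b c).radius := by
    refine Metric.eball_subset_eball (one_le_ordinaryHypergeometricSeries_radius 𝕂 a b c) ?_
    simpa [← ofReal_norm] using hx
  simpa only [ordinaryHypergeometricSeries_apply_eq, smul_eq_mul] using!
    (ordinaryHypergeometricSeries 𝕂 a b c).hasSum hx_mem

variable {c}

theorem ordinaryHypergeometric_sub_sub_one_left (hc : c ≠ 0) (hx : ‖x‖ < 1) :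
    ₂F₁ a b c x - ₂F₁ (a - 1) b c x = x * (b / c * ₂F₁ a (b + 1) (c + 1) x) := by
  have hF := hasSum_ordinaryHypergeometric a b c hx
  have hG := hasSum_ordinaryHypergeometric (a - 1) b c hx
  have hD := hasSum_ordinaryHypergeometric a (b + 1) (c + 1) hx
  refine eq_mul_of_hasSum_of_succ (hF.sub hG) (hD.mul_left (b / c))
    (by simp [ordinaryHypergeometricCoefficient]) fun n => ?_
  linear_combination
    x ^ (n + 1) * ordinaryHypergeometricCoefficient_succ_sub_sub_one_left a b hc n

theorem mul_ordinaryHypergeometric_eq_add (hc : ∀ k : ℕ, c ≠ -k) (hx : ‖x‖ < 1) :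
    c * ₂F₁ a b c x =
      a * (1 - x) * ₂F₁ (a + 1) (b + 1) (c + 1) x + (c - a) * ₂F₁ a (b + 1) (c + 1) x := by
  have hF := (hasSum_ordinaryHypergeometric a b c hx).mul_left c
  have hE := hasSum_ordinaryHypergeometric (a + 1) (b + 1) (c + 1) hx
  have hD := (hasSum_ordinaryHypergeometric a (b + 1) (c + 1) hx).mul_left (c - a)
  have h_shift : c * ₂F₁ a b c x - a * ₂F₁ (a + 1) (b + 1) (c + 1) x -
      (c - a) * ₂F₁ a (b + 1) (c + 1) x = x * (-a * ₂F₁ (a + 1) (b + 1) (c + 1) x) := by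
    refine eq_mul_of_hasSum_of_succ ((hF.sub (hE.mul_left a)).sub hD) (hE.mul_left (-a))
      (by simp [ordinaryHypergeometricCoefficient]) fun n => ?_
    linear_combination x ^ (n + 1) * mul_ordinaryHypergeometricCoefficient_succ_eq_add a b hc n
  linear_combination h_shift

/-- The left-hand side is `x * (1 - x)` times the derivative of `₂F₁ a b c`. -/
theorem ordinaryHypergeometric_contiguous (hc : ∀ k : ℕ, c ≠ -k) (hx : ‖x‖ < 1) :
    x * (1 - x) * (a * b / c * ₂F₁ (a + 1) (b + 1) (c + 1) x) =
      (c - a) * ₂F₁ (a - 1) b c x + (a - c + b * x) * ₂F₁ a b c x := by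
  have hc_zero : c ≠ 0 := by simpa using hc 0
  have h_sub := ordinaryHypergeometric_sub_sub_one_left a b hc_zero hx
  have h_add := mul_ordinaryHypergeometric_eq_add a b hc hx
  field_simp at h_sub ⊢
  linear_combination (c - a) * h_sub - x * b * h_add

end RCLike

lemma hyp_eq_ordinaryHypergeometric (a b c z : ℂ) : hyp a b c z = ₂F₁ a b c z := by
  rw [hyp, ordinaryHypergeometric_eq_tsum]
  refine tsum_congr fun n => ?_
  rw [smul_eq_mul]
  field_simp

theorem hyp_contiguous_identity_general {H M z : ℂ} (hH : H ≠ 0) (hM : 2 * M ≠ H) (hz₀ : z ≠ 0)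
    (hz : ‖z‖ < 1) :
    hyp (3 / 2 - M / H) (3 / 2 - M / H) 2 z =
      -(2 * H / ((z - 1) * z * (H - 2 * M) ^ 2)) *
        ((H + 2 * M) * hyp (-(1 / 2) - M / H) (1 / 2 - M / H) 1 z +
          (H * (z - 1) - 2 * M * (z + 1)) * hyp (1 / 2 - M / H) (1 / 2 - M / H) 1 z) := by
  have hz₁ : z - 1 ≠ 0 := sub_ne_zero.2 fun h => by simp [h] at hz
  have hHM : H - 2 * M ≠ 0 := sub_ne_zero.2 hM.symm
  obtain ⟨a, rfl⟩ : ∃ a, M = H * (1 / 2 - a) := ⟨1 / 2 - M / H, by field_simp; ring⟩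
  have ha : H * (1 / 2 - a) / H = 1 / 2 - a := mul_div_cancel_left₀ _ hH
  have h_one : ∀ k : ℕ, (1 : ℂ) ≠ -k := fun k h =>
    k.cast_add_one_ne_zero (R := ℂ) (by linear_combination h)
  have h_contiguous := ordinaryHypergeometric_contiguous a a h_one hz
  rw [one_add_one_eq_two] at h_contiguous
  simp only [hyp_eq_ordinaryHypergeometric, ha]
  rw [show 3 / 2 - (1 / 2 - a) = a + 1 by ring, show -(1 / 2) - (1 / 2 - a) = a - 1 by ring,
    show 1 / 2 - (1 / 2 - a) = a by ring]
  rw [← neg_div, div_mul_eq_mul_div, eq_div_iff (by positivity)]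
  linear_combination -4 * H ^ 2 * h_contiguous

/-- contiguous-relation identity for the Gauss hypergeometric function used
to rewrite the kernel `K₀` of the Klein–Gordon equation in de Sitter space-time. -/
theorem hyp_contiguous_identity (H : ℝ) (hH : 0 < H) (M : ℂ) (hM : 2 * M ≠ (H : ℂ))
    (z : ℝ) (hz : z ∈ Set.Ioo (0 : ℝ) 1) :
    hyp (3 / 2 - M / (H : ℂ)) (3 / 2 - M / (H : ℂ)) 2 (z : ℂ) =
      -(2 * (H : ℂ) / (((z : ℂ) - 1) * (z : ℂ) * ((H : ℂ) - 2 * M) ^ 2)) *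
        (((H : ℂ) + 2 * M) * hyp (-(1 / 2) - M / (H : ℂ)) (1 / 2 - M / (H : ℂ)) 1 (z : ℂ) +
          ((H : ℂ) * ((z : ℂ) - 1) - 2 * M * ((z : ℂ) + 1)) *
            hyp (1 / 2 - M / (H : ℂ)) (1 / 2 - M / (H : ℂ)) 1 (z : ℂ)) := by
  refine hyp_contiguous_identity_general ?_ hM ?_ ?_
  · exact_mod_cast hH.ne'
  · exact_mod_cast hz.1.ne'
  · simpa [abs_of_pos hz.1] using hz.2
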